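/- Let ψ be a symplectic homeomorphism of E, let W ⊆ E be open, let N ⊆ E be a subset with N ∩ W closed in W, and let V be an open subset of ψ(W). Then e_{ψ(W)}(V, ψ(N) ∩ ψ(W)) ≥ e_W(ψ⁻¹(V), N ∩ W). (The key displacement-energy inequality in the proof of invariance of rigidity.) -/

import Mathlib

/-!
Let `φ ∈ Ham(ψ(W))` displace `V` from `ψ(N)`, and let `H` generate `φ` with `‖H‖` within `ε` of
the Hofer norm. With `Ψₘ → ψ` the approximating symplectomorphisms, the pullback
`H(t, Ψₘ z)` has the same norm as `H` and generates `Ψₘ⁻¹ φ Ψₘ` (`pull_isHamFlow`, `pull_HNorm`),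
so it suffices that for some large `m` it is supported in `W` and displaces `ψ⁻¹(V)` from `N`
(`exists_pull_displacing`).

Let `K ⊆ ψ(W)` be the compact projection of `supp H`, and `L ⊆ W` a compact neighbourhood of
`ψ⁻¹(K)`. Since `Ψₘ⁻¹ → ψ⁻¹` uniformly on `K`, eventually `Ψₘ⁻¹(K) ⊆ L`, which gives the support
condition. Off `L`, both `Ψₘ⁻¹ φ Ψₘ` and `ψ⁻¹ φ ψ` are the identity, so the displacement there is
inherited from `φ`. On `L`, the maps `Ψₘ⁻¹ φ Ψₘ` converge uniformly to `ψ⁻¹ φ ψ`, which sends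
`L ∩ closure (ψ⁻¹ V)` into the set `W \ N`, open because `N ∩ W` is closed in `W`; compactness
of `L` finishes. Continuity of `φ`, its being the identity off `K`, and `φ(ψ(W)) ⊆ ψ(W)` follow
from Gronwall's inequality and uniqueness for the Lipschitz field `X_H`.
-/

open scoped ENNReal Topology

noncomputable section

/-- The standard symplectic vector space `E = ℝⁿ × ℝⁿ`. -/
abbrev E (n : ℕ) := (Fin n → ℝ) × (Fin n → ℝ)

/-- The standard symplectic form `ω₀((x,y),(x',y')) = ⟨x,y'⟩ − ⟨y,x'⟩`. -/
def omega0 (n : ℕ) (z w : E n) : ℝ :=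
  (∑ i, z.1 i * w.2 i) - ∑ i, z.2 i * w.1 i

/-- The Hamiltonian vector field `X_{H_t}(x,y) = (∂_y H(t,x,y), −∂_x H(t,x,y))`. -/
def XH (n : ℕ) (H : ℝ × E n → ℝ) (t : ℝ) (z : E n) : E n :=
  ((fun i => fderiv ℝ (fun w => H (t, w)) z (0, Pi.single i 1)),
   (fun i => -fderiv ℝ (fun w => H (t, w)) z (Pi.single i 1, 0)))

/-- `Φ` is the Hamiltonian flow of `H`: `Φ 0 = id` and `(d/dt) Φ t z = X_{H_t} (Φ t z)`. -/
def IsHamFlow (n : ℕ) (H : ℝ × E n → ℝ) (Φ : ℝ → E n → E n) : Prop :=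
  (∀ z, Φ 0 z = z) ∧ ∀ z t, HasDerivAt (fun s => Φ s z) (XH n H t (Φ t z)) t

/-- `H : ℝ × E → ℝ` is smooth with support a compact subset of `[0,1] × W`. -/
def AdmissibleH (n : ℕ) (W : Set (E n)) (H : ℝ × E n → ℝ) : Prop :=
  ContDiff ℝ (⊤ : ℕ∞) H ∧ IsCompact (tsupport H) ∧
    tsupport H ⊆ Set.Icc (0 : ℝ) 1 ×ˢ W

/-- `Ham(W)`: time-one maps of Hamiltonian flows of admissible Hamiltonians. -/
def HamGrp (n : ℕ) (W : Set (E n)) : Set (E n → E n) :=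
  {φ | ∃ H Φ, AdmissibleH n W H ∧ IsHamFlow n H Φ ∧ φ = Φ 1}

/-- `‖H‖ = ∫₀¹ (sup H(t,·) − inf H(t,·)) dt`. -/
def HNorm (n : ℕ) (H : ℝ × E n → ℝ) : ℝ :=
  ∫ t in (0:ℝ)..(1:ℝ),
    (sSup (Set.range fun z => H (t, z)) - sInf (Set.range fun z => H (t, z)))

/-- The Hofer norm `‖φ‖_W` of `φ ∈ Ham(W)`. -/
def hoferNorm (n : ℕ) (W : Set (E n)) (φ : E n → E n) : ℝ :=
  sInf {c | ∃ H Φ, AdmissibleH n W H ∧ IsHamFlow n H Φ ∧ φ = Φ 1 ∧ c = HNorm n H}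

/-- The displacement energy `e_W(U,N)`, valued in `ℝ≥0∞` (so `inf ∅ = ⊤`).
`closure U ∩ W` is the closure of `U` in `W`. -/
def dispE (n : ℕ) (W U N : Set (E n)) : ℝ≥0∞ :=
  sInf {c | ∃ φ ∈ HamGrp n W, φ '' (closure U ∩ W) ∩ N = ∅ ∧
    c = ENNReal.ofReal (hoferNorm n W φ)}

/-- `p` is rigid with respect to `N` in `W`. -/
def RigidWrt (n : ℕ) (W N : Set (E n)) (p : E n) : Prop :=
  ∀ U : Set (E n), IsOpen U → p ∈ U → U ⊆ W → 0 < dispE n W U N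

/-- `N` is a subset of `W` which is closed as a subset of `W`. -/
def ClosedIn (n : ℕ) (W N : Set (E n)) : Prop :=
  N ⊆ W ∧ closure N ∩ W ⊆ N

/-- `N` is locally closed. -/
def LocallyClosedSet (n : ℕ) (N : Set (E n)) : Prop :=
  ∀ q ∈ N, ∃ V : Set (E n), IsOpen V ∧ q ∈ V ∧ ClosedIn n V (N ∩ V)

/-- `p` is locally rigid with respect to `N`. -/
def LocRigid (n : ℕ) (N : Set (E n)) (p : E n) : Prop :=
  ∃ W : Set (E n), IsOpen W ∧ p ∈ W ∧ ClosedIn n W (N ∩ W) ∧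
    RigidWrt n W (N ∩ W) p

/-- `ψ` is a symplectomorphism from the open set `W` onto its (open) image. -/
def IsSymplecto (n : ℕ) (W : Set (E n)) (ψ : E n → E n) : Prop :=
  IsOpen W ∧ IsOpen (ψ '' W) ∧ Set.InjOn ψ W ∧ ContDiffOn ℝ (⊤ : ℕ∞) ψ W ∧
  (∃ g : E n → E n, ContDiffOn ℝ (⊤ : ℕ∞) g (ψ '' W) ∧ ∀ z ∈ W, g (ψ z) = z) ∧
  ∀ z ∈ W, ∀ u v, omega0 n (fderiv ℝ ψ z u) (fderiv ℝ ψ z v) = omega0 n u v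

/-- `ψ` is a symplectic homeomorphism of `E`: a homeomorphism which is a `C⁰`-limit
(uniformly on compact sets, together with inverses) of symplectomorphisms of `E` onto `E`. -/
def IsSympHomeo (n : ℕ) (ψ : E n ≃ₜ E n) : Prop :=
  ∃ Ψ : ℕ → E n ≃ E n,
    (∀ m, IsSymplecto n Set.univ (Ψ m)) ∧
    TendstoLocallyUniformly (fun m z => Ψ m z) (fun z => ψ z) Filter.atTop ∧
    TendstoLocallyUniformly (fun m z => (Ψ m).symm z) (fun z => ψ.symm z) Filter.atTop

/-- A fixed `k`-dimensional coordinate subspace `ℝᵏ × {0}` of `E`. -/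
def coordSubspace (n k : ℕ) : Set (E n) :=
  {z | (∀ i : Fin n, k ≤ (i : ℕ) → z.1 i = 0) ∧
       (∀ i : Fin n, k ≤ n + (i : ℕ) → z.2 i = 0)}

/-- `N` is a smooth `k`-dimensional submanifold of `E`. -/
def IsSubmanifold (n k : ℕ) (N : Set (E n)) : Prop :=
  ∀ p ∈ N, ∃ (V : Set (E n)) (Φ : E n → E n),
    IsOpen V ∧ p ∈ V ∧ IsOpen (Φ '' V) ∧ Set.InjOn Φ V ∧
    ContDiffOn ℝ (⊤ : ℕ∞) Φ V ∧
    (∃ g : E n → E n, ContDiffOn ℝ (⊤ : ℕ∞) g (Φ '' V) ∧ ∀ z ∈ V, g (Φ z) = z) ∧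
    Φ '' (N ∩ V) = coordSubspace n k ∩ Φ '' V

/-- The tangent space `T_pN`, as velocities of curves through `p` lying locally in `N`. -/
def TangentSet (n : ℕ) (N : Set (E n)) (p : E n) : Set (E n) :=
  {v | ∃ γ : ℝ → E n, γ 0 = p ∧ (∀ᶠ t in 𝓝 (0:ℝ), γ t ∈ N) ∧ HasDerivAt γ v 0}

/-- The symplectic orthogonal complement `T^{ω₀}`. -/
def symplOrth (n : ℕ) (T : Set (E n)) : Set (E n) :=
  {v | ∀ u ∈ T, omega0 n v u = 0}

/-- `N` is coisotropic: `(T_pN)^{ω₀} ⊆ T_pN` for all `p ∈ N`. -/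
def IsCoisotropic (n : ℕ) (N : Set (E n)) : Prop :=
  ∀ p ∈ N, symplOrth n (TangentSet n N p) ⊆ TangentSet n N p

/-- `N` is Lagrangian: `(T_pN)^{ω₀} = T_pN` for all `p ∈ N`. -/
def IsLagrangian (n : ℕ) (N : Set (E n)) : Prop :=
  ∀ p ∈ N, symplOrth n (TangentSet n N p) = TangentSet n N p

/-- `Σ_N`: Hamiltonian diffeomorphisms preserving `N`. -/
def SigmaGrp (n : ℕ) (N : Set (E n)) : Set (E n → E n) :=
  {φ | φ ∈ HamGrp n Set.univ ∧ φ '' N = N}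

/-- `Σ̄_N`: the closure of `Σ_N` in the Hofer metric. -/
def SigmaBar (n : ℕ) (N : Set (E n)) : Set (E n → E n) :=
  {φ | φ ∈ HamGrp n Set.univ ∧ ∀ ε : ℝ, 0 < ε →
    ∃ ψ ∈ SigmaGrp n N, ∃ χ : E n → E n,
      Function.LeftInverse χ ψ ∧ Function.RightInverse χ ψ ∧
      hoferNorm n Set.univ (χ ∘ φ) < ε}

/-- The rigid locus `R_N = ⋂_{φ ∈ Σ̄_N} φ⁻¹(N)`. -/
def rigidLocus (n : ℕ) (N : Set (E n)) : Set (E n) :=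
  ⋂ φ ∈ SigmaBar n N, φ ⁻¹' N

/-! ### The Hamiltonian vector field -/

/-- The vectors `(single i 1, 0)` and `(0, single i 1)` detect each coordinate of `u`, so `ω₀` is
nondegenerate. -/
lemma omega0_nondegenerate {n : ℕ} {u u' : E n}
    (h : ∀ v, omega0 n u v = omega0 n u' v) : u = u' := by
  refine Prod.ext (funext fun i => ?_) (funext fun i => ?_)
  · simpa [omega0, Pi.single_apply] using h (0, Pi.single i 1)
  · simpa [omega0, Pi.single_apply] using h (Pi.single i 1, 0)

/-- The characterization `ω₀(X_{H_t}(z), v) = D_z H(t,·)(v)`; it holds for every `H`, since the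
right side is linear in `v` even when `fderiv` takes its junk value. -/
lemma omega0_XH {n : ℕ} (H : ℝ × E n → ℝ) (t : ℝ) (z v : E n) :
    omega0 n (XH n H t z) v = fderiv ℝ (fun w => H (t, w)) z v := by
  set L := fderiv ℝ (fun w => H (t, w)) z
  obtain ⟨a, b⟩ := v
  have hsing : ∀ i : Fin n, (fun j => if i = j then (1 : ℝ) else 0) = Pi.single i 1 := by
    intro i; ext j; simp [Pi.single_apply, eq_comm]
  have ha : L (a, 0) = ∑ i, a i * L (Pi.single i 1, 0) := by
    have := (L.comp (ContinuousLinearMap.inl ℝ _ _)).toLinearMap.pi_apply_eq_sum_univ a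
    simpa [hsing] using this
  have hb : L (0, b) = ∑ i, b i * L (0, Pi.single i 1) := by
    have := (L.comp (ContinuousLinearMap.inr ℝ _ _)).toLinearMap.pi_apply_eq_sum_univ b
    simpa [hsing] using this
  have hab : L (a, b) = L (a, 0) + L (0, b) := by
    rw [← map_add]; simp
  rw [hab, ha, hb]
  simp only [omega0, XH, neg_mul, Finset.sum_neg_distrib, sub_neg_eq_add, mul_comm (a _),
    mul_comm (b _), L]
  exact add_comm _ _

lemma XH_eq_zero {n : ℕ} {H : ℝ × E n → ℝ} {t : ℝ} {z : E n}
    (h : (t, z) ∉ tsupport H) : XH n H t z = 0 := by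
  have h1 : (fun w => H (t, w)) =ᶠ[𝓝 z] fun _ => 0 := by
    have h2 : ∀ᶠ p in 𝓝 (t, z), H p = 0 := notMem_tsupport_iff_eventuallyEq.1 h
    exact (Continuous.tendsto (by fun_prop : Continuous fun w : E n => (t, w)) z).eventually h2
  have h3 : fderiv ℝ (fun w => H (t, w)) z = 0 := by rw [h1.fderiv_eq]; simp
  ext i <;> simp [XH, h3]

lemma XH_lipschitz {n : ℕ} {W : Set (E n)} {H : ℝ × E n → ℝ} (hH : AdmissibleH n W H) :
    ∃ C, ∀ t, LipschitzWith C (XH n H t) := by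
  obtain ⟨hs, hc, -⟩ := hH
  have hfd : ∀ (t : ℝ) (z v : E n),
      fderiv ℝ (fun w => H (t, w)) z v = fderiv ℝ H (t, z) (0, v) := by
    intro t z v
    have h1 : HasFDerivAt H (fderiv ℝ H (t, z)) (t, z) :=
      (hs.differentiable (by simp) _).hasFDerivAt
    have h2 := h1.comp z (hasFDerivAt_prodMk_right t z)
    have h3 := h2.fderiv
    simp only [Function.comp_def] at h3
    rw [h3]; simp
  have hfs : ContDiff ℝ 1 (fderiv ℝ H) := hs.fderiv_right (by norm_cast)
  have hG : ContDiff ℝ 1 (fun p : ℝ × E n => XH n H p.1 p.2) := by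
    simp only [XH, hfd]
    refine ContDiff.prodMk (contDiff_pi.2 fun i => ?_) (contDiff_pi.2 fun i => ?_)
    · exact hfs.clm_apply contDiff_const
    · exact (hfs.clm_apply contDiff_const).neg
  have hGc : HasCompactSupport (fun p : ℝ × E n => XH n H p.1 p.2) :=
    HasCompactSupport.intro hc fun p hp => XH_eq_zero hp
  obtain ⟨C, hC⟩ := ContDiff.lipschitzWith_of_hasCompactSupport hGc hG one_ne_zero
  exact ⟨C, fun t => fun x y => by
    simpa [Prod.edist_eq] using hC (t, x) (t, y)⟩

/-! ### Properties of the time-one map -/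

lemma flow_continuous {n : ℕ} {W : Set (E n)} {H : ℝ × E n → ℝ} {Φ : ℝ → E n → E n}
    (hH : AdmissibleH n W H) (hΦ : IsHamFlow n H Φ) : Continuous (Φ 1) := by
  obtain ⟨C, hC⟩ := XH_lipschitz hH
  have hcont : ∀ z, Continuous fun s => Φ s z := fun z =>
    continuous_iff_continuousAt.2 fun t => (hΦ.2 z t).continuousAt
  refine (LipschitzWith.of_dist_le_mul (K := (Real.exp C).toNNReal) fun x y => ?_).continuous
  have := dist_le_of_trajectories_ODE (a := 0) (b := 1) (δ := dist x y) hC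
    (hcont x).continuousOn (fun t _ => (hΦ.2 x t).hasDerivWithinAt)
    (hcont y).continuousOn (fun t _ => (hΦ.2 y t).hasDerivWithinAt)
    (by simp [hΦ.1]) 1 (by simp)
  rw [Real.coe_toNNReal _ (Real.exp_pos _).le]
  simpa [mul_comm] using this

/-- A trajectory meeting a point `q` outside the support at time `t₀` is constant, because the
constant path at `q` is a trajectory too. -/
lemma flow_const {n : ℕ} {W : Set (E n)} {H : ℝ × E n → ℝ} {Φ : ℝ → E n → E n}
    (hH : AdmissibleH n W H) (hΦ : IsHamFlow n H Φ) {p q : E n} {t₀ : ℝ}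
    (hq : q ∉ Prod.snd '' tsupport H) (h : Φ t₀ p = q) (t : ℝ) : Φ t p = q := by
  obtain ⟨C, hC⟩ := XH_lipschitz hH
  have h0 : ∀ s, XH n H s q = 0 := fun s => XH_eq_zero fun hs => hq ⟨_, hs, rfl⟩
  have := ODE_solution_unique_univ (v := XH n H) (s := fun _ => Set.univ) (K := C) (t₀ := t₀)
    (f := fun s => Φ s p) (g := fun _ => q) (fun s => (hC s).lipschitzOnWith)
    (fun s => ⟨hΦ.2 p s, trivial⟩)
    (fun s => ⟨by rw [h0]; exact hasDerivAt_const _ _, trivial⟩) h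
  exact congrFun this t

lemma flow_fixed {n : ℕ} {W : Set (E n)} {H : ℝ × E n → ℝ} {Φ : ℝ → E n → E n}
    (hH : AdmissibleH n W H) (hΦ : IsHamFlow n H Φ) {q : E n}
    (hq : q ∉ Prod.snd '' tsupport H) : Φ 1 q = q :=
  flow_const hH hΦ hq (hΦ.1 q) 1

lemma flow_mapsTo {n : ℕ} {W : Set (E n)} {H : ℝ × E n → ℝ} {Φ : ℝ → E n → E n}
    (hH : AdmissibleH n W H) (hΦ : IsHamFlow n H Φ) {p : E n} (hp : p ∈ W) : Φ 1 p ∈ W := by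
  by_contra hq
  have hK : Φ 1 p ∉ Prod.snd '' tsupport H := by
    rintro ⟨x, hx, hxp⟩
    exact hq (hxp ▸ (hH.2.2 hx).2)
  have := flow_const hH hΦ hK rfl 0
  rw [hΦ.1] at this
  exact hq (this ▸ hp)

lemma HNorm_nonneg {n : ℕ} {W : Set (E n)} {H : ℝ × E n → ℝ} (hH : AdmissibleH n W H) :
    0 ≤ HNorm n H := by
  obtain ⟨C, hC⟩ := HasCompactSupport.exists_bound_of_continuous (f := H) hH.2.1 hH.1.continuous
  refine intervalIntegral.integral_nonneg zero_le_one fun t _ => sub_nonneg.2 ?_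
  refine Real.sInf_le_sSup _ ⟨-C, ?_⟩ ⟨C, ?_⟩ <;> rintro _ ⟨z, rfl⟩
  · exact (abs_le.1 (hC (t, z))).1
  · exact (abs_le.1 (hC (t, z))).2

/-! ### Conjugation by a symplectomorphism of `E` -/

lemma IsSymplecto.contDiff {n : ℕ} {g : E n ≃ E n} (hg : IsSymplecto n Set.univ g) :
    ContDiff ℝ (⊤ : ℕ∞) g :=
  contDiffOn_univ.1 hg.2.2.2.1

lemma IsSymplecto.contDiff_symm {n : ℕ} {g : E n ≃ E n} (hg : IsSymplecto n Set.univ g) :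
    ContDiff ℝ (⊤ : ℕ∞) g.symm := by
  obtain ⟨f, hf, hfg⟩ := hg.2.2.2.2.1
  have : f = g.symm := funext fun y => by
    simpa using hfg (g.symm y) trivial
  rw [Set.image_univ, g.surjective.range_eq, contDiffOn_univ, this] at hf
  exact hf

/-- The pullback `H(t, g z)` of a Hamiltonian by a map `g` of `E`. -/
def pullH {n : ℕ} (H : ℝ × E n → ℝ) (g : E n → E n) (p : ℝ × E n) : ℝ := H (p.1, g p.2)

/-- Naturality of the Hamiltonian vector field: a symplectomorphism `g` carries `X_{H ∘ g}`
to `X_H`. -/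
lemma XH_pull {n : ℕ} {H : ℝ × E n → ℝ} (hH : ContDiff ℝ (⊤ : ℕ∞) H) {g : E n ≃ E n}
    (hg : IsSymplecto n Set.univ g) (t : ℝ) (y : E n) :
    fderiv ℝ g.symm y (XH n H t y) = XH n (pullH H g) t (g.symm y) := by
  refine omega0_nondegenerate fun v => ?_
  have hgd : ∀ z, DifferentiableAt ℝ g z := hg.contDiff.differentiable (by simp)
  have hsd : ∀ z, DifferentiableAt ℝ g.symm z := hg.contDiff_symm.differentiable (by simp)
  have hHd : Differentiable ℝ fun w => H (t, w) :=
    (hH.differentiable (by simp)).comp (by fun_prop)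
  have hinv : ∀ u, fderiv ℝ g (g.symm y) (fderiv ℝ g.symm y u) = u := by
    intro u
    have h1 := fderiv_comp y (hgd (g.symm y)) (hsd y)
    rw [g.self_comp_symm, fderiv_id] at h1
    exact (congrArg (fun L : E n →L[ℝ] E n => L u) h1).symm
  rw [← hg.2.2.2.2.2 (g.symm y) trivial, hinv, omega0_XH, omega0_XH]
  have h2 := fderiv_comp (g.symm y) (hHd (g (g.symm y))) (hgd (g.symm y))
  have h3 : (fun w => pullH H g (t, w)) = (fun w => H (t, w)) ∘ g := rfl
  rw [h3, h2]
  simp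

lemma pull_isHamFlow {n : ℕ} {H : ℝ × E n → ℝ} {Φ : ℝ → E n → E n}
    (hH : ContDiff ℝ (⊤ : ℕ∞) H) (hΦ : IsHamFlow n H Φ) {g : E n ≃ E n}
    (hg : IsSymplecto n Set.univ g) :
    IsHamFlow n (pullH H g) (fun t z => g.symm (Φ t (g z))) := by
  refine ⟨fun z => by simp [hΦ.1], fun z t => ?_⟩
  rw [← XH_pull hH hg]
  exact ((hg.contDiff_symm.differentiable (by simp) _).hasFDerivAt).comp_hasDerivAt t
    (hΦ.2 (g z) t)

lemma pull_admissible {n : ℕ} {W W' : Set (E n)} {H : ℝ × E n → ℝ} (hH : AdmissibleH n W' H)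
    {g : E n ≃ E n} (hg : IsSymplecto n Set.univ g)
    (hK : ∀ y ∈ Prod.snd '' tsupport H, g.symm y ∈ W) : AdmissibleH n W (pullH H g) := by
  have hgc := hg.contDiff.continuous
  have hsc := hg.contDiff_symm.continuous
  have hsub : tsupport (pullH H g) ⊆ (fun p : ℝ × E n => (p.1, g p.2)) ⁻¹' tsupport H :=
    tsupport_comp_subset_preimage H (f := fun p : ℝ × E n => (p.1, g p.2)) (by fun_prop)
  have himg : (fun p : ℝ × E n => (p.1, g p.2)) ⁻¹' tsupport H ⊆
      (fun p : ℝ × E n => (p.1, g.symm p.2)) '' tsupport H :=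
    fun p hp => ⟨_, hp, by simp⟩
  refine ⟨hH.1.comp (contDiff_fst.prodMk (hg.contDiff.comp contDiff_snd)), ?_, ?_⟩
  · exact (hH.2.1.image (by fun_prop)).of_isClosed_subset (isClosed_tsupport _)
      (hsub.trans himg)
  · intro p hp
    refine ⟨(hH.2.2 (hsub hp)).1, ?_⟩
    simpa using hK (g p.2) ⟨_, hsub hp, rfl⟩

lemma pull_HNorm {n : ℕ} (H : ℝ × E n → ℝ) (g : E n ≃ E n) :
    HNorm n (pullH H g) = HNorm n H := by
  have : ∀ t, Set.range (fun z => pullH H g (t, z)) = Set.range fun z => H (t, z) :=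
    fun t => g.surjective.range_comp fun z => H (t, z)
  simp only [HNorm, this]

/-! ### Passing to the limit -/

/-- Locally uniform convergence to a continuous limit is continuous convergence. -/
lemma tendsto_of_locallyUniformly {X : Type*} [UniformSpace X] {F : ℕ → X → X} {f : X → X}
    (h : TendstoLocallyUniformly F f Filter.atTop) (hf : Continuous f) {ι : Type*}
    {l : Filter ι} {m : ι → ℕ} (hm : Filter.Tendsto m l Filter.atTop) {x : X} {u : ι → X}
    (hu : Filter.Tendsto u l (𝓝 x)) : Filter.Tendsto (fun i => F (m i) (u i)) l (𝓝 (f x)) := by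
  refine tendsto_comp_of_locally_uniform_limit (F := fun i => F (m i)) hf.continuousAt hu
    fun U hU => ?_
  obtain ⟨t, ht, hev⟩ := h U hU x
  exact ⟨t, ht, hm.eventually hev⟩

/-- A condition on `(m, y)` that holds near each point of a compact set for large `m` holds on
the whole set for large `m`. -/
lemma eventually_forall_compact {X : Type*} [TopologicalSpace X] {K : Set X} (hK : IsCompact K)
    {P : ℕ → X → Prop} (h : ∀ y ∈ K, ∀ᶠ q : ℕ × X in Filter.atTop ×ˢ 𝓝 y, P q.1 q.2) :
    ∀ᶠ m in Filter.atTop, ∀ y ∈ K, P m y := by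
  have : ∀ᶠ q : ℕ × X in Filter.atTop ×ˢ 𝓝ˢ K, P q.1 q.2 := hK.mem_prod_nhdsSet_of_forall h
  exact this.curry.mono fun _ h => h.self_of_nhdsSet

/-- Every admissible Hamiltonian in `ψ(W)` whose time-one map displaces `V` from `ψ(N)` has a
pullback by an approximating symplectomorphism that is admissible in `W` and displaces `ψ⁻¹(V)`
from `N`. -/
lemma exists_pull_displacing {n : ℕ} {ψ : E n ≃ₜ E n} {Ψ : ℕ → E n ≃ E n}
    (hΨ : ∀ m, IsSymplecto n Set.univ (Ψ m))
    (hlim : TendstoLocallyUniformly (fun m z => Ψ m z) (fun z => ψ z) Filter.atTop)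
    (hlim' : TendstoLocallyUniformly (fun m z => (Ψ m).symm z) (fun z => ψ.symm z) Filter.atTop)
    {W N V : Set (E n)} (hW : IsOpen W) (hNW : ClosedIn n W (N ∩ W))
    {H : ℝ × E n → ℝ} {Φ : ℝ → E n → E n} (hH : AdmissibleH n (ψ '' W) H)
    (hΦ : IsHamFlow n H Φ)
    (hdisp : Φ 1 '' (closure V ∩ ψ '' W) ∩ ((ψ '' N) ∩ (ψ '' W)) = ∅) :
    ∃ m, AdmissibleH n W (pullH H (Ψ m)) ∧
      (fun z => (Ψ m).symm (Φ 1 (Ψ m z))) '' (closure (ψ.symm '' V) ∩ W) ∩ (N ∩ W) = ∅ := by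
  set K : Set (E n) := Prod.snd '' tsupport H with hKdef
  have hK : IsCompact K := hH.2.1.image continuous_snd
  have hKW : ψ.symm '' K ⊆ W := by
    rintro _ ⟨_, ⟨x, hx, rfl⟩, rfl⟩
    obtain ⟨w, hw, hwx⟩ := (hH.2.2 hx).2
    rw [← hwx]; simpa using hw
  have hφ := flow_continuous hH hΦ
  -- `ψ⁻¹ φ ψ` already displaces `ψ⁻¹(V)` from `N` inside `W`.
  have hdisp' : ∀ z ∈ closure (ψ.symm '' V) ∩ W, ψ.symm (Φ 1 (ψ z)) ∉ N := by
    rintro z ⟨hzV, hzW⟩ hzN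
    have hψz : ψ z ∈ closure V := by
      rw [← ψ.symm.image_closure] at hzV
      obtain ⟨v, hv, rfl⟩ := hzV
      simpa using hv
    have : Φ 1 (ψ z) ∈ Φ 1 '' (closure V ∩ ψ '' W) ∩ ((ψ '' N) ∩ (ψ '' W)) :=
      ⟨⟨_, ⟨hψz, z, hzW, rfl⟩, rfl⟩, ⟨_, hzN, by simp⟩, flow_mapsTo hH hΦ ⟨z, hzW, rfl⟩⟩
    simp [hdisp] at this
  -- Outside the compact set `L`, both `ψ⁻¹ φ ψ` and, for large `m`, `Ψₘ⁻¹ φ Ψₘ` are the identity.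
  obtain ⟨L, hL, hKL, hLW⟩ := exists_compact_between (hK.image ψ.symm.continuous) hW hKW
  have hev1 : ∀ᶠ m in Filter.atTop, ∀ y ∈ K, (Ψ m).symm y ∈ L := by
    refine eventually_forall_compact hK fun y hy => ?_
    have := tendsto_of_locallyUniformly hlim' ψ.symm.continuous
      (l := Filter.atTop ×ˢ 𝓝 y) Filter.tendsto_fst Filter.tendsto_snd
    exact (this.eventually (isOpen_interior.mem_nhds (hKL ⟨y, hy, rfl⟩))).mono
      fun q hq => interior_subset hq
  have hev2 : ∀ᶠ m in Filter.atTop, ∀ z ∈ L,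
      ¬ (z ∈ closure (ψ.symm '' V) ∧ (Ψ m).symm (Φ 1 (Ψ m z)) ∈ N ∩ W) := by
    refine eventually_forall_compact hL fun z hz => ?_
    by_cases hzV : z ∈ closure (ψ.symm '' V)
    · have h1 := tendsto_of_locallyUniformly hlim ψ.continuous
        (l := Filter.atTop ×ˢ 𝓝 z) Filter.tendsto_fst Filter.tendsto_snd
      have h2 := tendsto_of_locallyUniformly hlim' ψ.symm.continuous
        Filter.tendsto_fst ((hφ.tendsto (ψ z)).comp h1)
      have hmem : ψ.symm (Φ 1 (ψ z)) ∈ (closure (N ∩ W))ᶜ := by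
        intro hcl
        refine hdisp' z ⟨hzV, hLW hz⟩ (hNW.2 ⟨hcl, ?_⟩).1
        obtain ⟨w, hw, hwz⟩ := flow_mapsTo hH hΦ (p := ψ z) ⟨z, hLW hz, rfl⟩
        rw [← hwz]; simpa using hw
      exact (h2.eventually (isClosed_closure.isOpen_compl.mem_nhds hmem)).mono
        fun q hq hq' => hq (subset_closure hq'.2)
    · have h1 : Filter.Tendsto Prod.snd ((Filter.atTop : Filter ℕ) ×ˢ 𝓝 z) (𝓝 z) :=
        Filter.tendsto_snd
      exact (h1.eventually (isClosed_closure.isOpen_compl.mem_nhds hzV)).mono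
        fun q hq hq' => hq hq'.1
  obtain ⟨m, hm1, hm2⟩ := (hev1.and hev2).exists
  refine ⟨m, pull_admissible hH (hΨ m) fun y hy => hLW (hm1 y hy), ?_⟩
  rw [Set.eq_empty_iff_forall_notMem]
  rintro _ ⟨⟨z, ⟨hzV, hzW⟩, rfl⟩, hzN⟩
  by_cases hzL : z ∈ L
  · exact hm2 z hzL ⟨hzV, hzN⟩
  · have h1 : Ψ m z ∉ K := fun h => hzL (by simpa using hm1 _ h)
    have h2 : ψ z ∉ K := fun h => hzL (interior_subset (hKL ⟨_, h, by simp⟩))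
    simp only [flow_fixed hH hΦ h1, Equiv.symm_apply_apply] at hzN
    refine hdisp' z ⟨hzV, hzW⟩ ?_
    rw [flow_fixed hH hΦ h2]
    simpa using hzN.1

/-- the key displacement-energy inequality. -/
theorem dispE_of_symplectic_homeo
    (n : ℕ) (hn : 1 ≤ n) (ψ : E n ≃ₜ E n) (hψ : IsSympHomeo n ψ)
    (W : Set (E n)) (hW : IsOpen W) (N : Set (E n)) (hNW : ClosedIn n W (N ∩ W))
    (V : Set (E n)) (hV : IsOpen V) (hVW : V ⊆ ⇑ψ '' W) :
    dispE n W (⇑ψ.symm '' V) (N ∩ W) ≤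
      dispE n (⇑ψ '' W) V ((⇑ψ '' N) ∩ (⇑ψ '' W)) := by
  obtain ⟨Ψ, hΨ, hlim, hlim'⟩ := hψ
  refine le_sInf ?_
  rintro _ ⟨φ, ⟨H₀, Φ₀, hH₀, hΦ₀, hφ₀⟩, hdisp, rfl⟩
  refine ENNReal.le_of_forall_pos_le_add fun ε hε _ => ?_
  -- A Hamiltonian generating `φ` that is `ε`-close to realizing the Hofer norm.
  obtain ⟨_, ⟨H, Φ, hH, hΦ, rfl, rfl⟩, hlt⟩ := exists_lt_of_csInf_lt
    (s := {c | ∃ H Φ, AdmissibleH n (ψ '' W) H ∧ IsHamFlow n H Φ ∧ φ = Φ 1 ∧ c = HNorm n H})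
    ⟨_, H₀, Φ₀, hH₀, hΦ₀, hφ₀, rfl⟩
    (show hoferNorm n (ψ '' W) φ < hoferNorm n (ψ '' W) φ + ε by
      have : (0 : ℝ) < ε := hε
      linarith)
  obtain ⟨m, hadm, hm⟩ := exists_pull_displacing hΨ hlim hlim' hW hNW hH hΦ hdisp
  have hflow := pull_isHamFlow hH.1 hΦ (hΨ m)
  refine le_trans (b := ENNReal.ofReal (hoferNorm n W fun z => (Ψ m).symm (Φ 1 (Ψ m z))))
    (sInf_le ⟨_, ⟨_, _, hadm, hflow, rfl⟩, hm, rfl⟩) ?_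
  have hle : hoferNorm n W (fun z => (Ψ m).symm (Φ 1 (Ψ m z))) ≤
      hoferNorm n (ψ '' W) (Φ 1) + ε := by
    refine le_trans (b := HNorm n (pullH H (Ψ m)))
      (csInf_le ⟨0, ?_⟩ ⟨_, _, hadm, hflow, rfl, rfl⟩) ?_
    · rintro _ ⟨H', Φ', hH', -, -, rfl⟩
      exact HNorm_nonneg hH'
    · rw [pull_HNorm]; exact hlt.le
  refine (ENNReal.ofReal_le_ofReal hle).trans (ENNReal.ofReal_add_le.trans ?_)
  simp
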